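/- For every α* > 0 there exists a unique ω* > 0 such that the solution (ℓ(τ), α(τ)) of ℓ' = −ω*(α² + ℓ²) + (α² + ℓ²)^{3/2} − 2α³ℓ − αℓ³, α' = −α⁴ with initial condition (ℓ(0), α(0)) = (0, α*) exists for all τ ≥ 0 and satisfies ℓ(τ) → ω* as τ → ∞. Moreover ω* is strictly increasing in α*. -/

import Mathlib

open Real Set Filter Topology

noncomputable def spiralL (ω ℓ α : ℝ) : ℝ :=
  -ω * (α ^ 2 + ℓ ^ 2) + (α ^ 2 + ℓ ^ 2) ^ ((3 : ℝ) / 2) - 2 * α ^ 3 * ℓ - α * ℓ ^ 3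

noncomputable def spiralA (α : ℝ) : ℝ := -α ^ 4

/-- The shooting solution with (ℓ(0), α(0)) = (0, α*) and parameter ω exists for all τ ≥ 0
and satisfies ℓ(τ) → ω as τ → ∞. -/
def ShootingConnects (αstar ω : ℝ) : Prop :=
  ∃ ℓ α : ℝ → ℝ,
    ℓ 0 = 0 ∧ α 0 = αstar ∧
    (∀ τ ≥ (0 : ℝ), HasDerivAt ℓ (spiralL ω (ℓ τ) (α τ)) τ) ∧
    (∀ τ ≥ (0 : ℝ), HasDerivAt α (spiralA (α τ)) τ) ∧
    Tendsto ℓ atTop (nhds ω)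

/-!
The equation for `α` is explicit, `α = (p + 3 τ) ^ (-1 / 3)` with `p = α* ^ (-3)`, so the system is
a scalar nonautonomous equation for `ℓ`, and solutions can be compared pointwise. Raising `ω` lowers
the field and hence the solution, which then cannot have the larger limit; this gives uniqueness.
For monotonicity, the solution with the larger `α*` is already positive when its `α` has dropped to
the smaller one, so from then on it lies strictly above the other if its `ω` is not larger. Equal
values of `ω` remain to be excluded: both solutions would converge to `ω`, which is a repelling
equilibrium at `α = 0`.

Existence is by shooting in `ω`. For `ω = 0` the solution exceeds every bound `M`, and for
`ω = 2 α*` it becomes negative. Both events are open in `ω`, and for `M` large enough neither can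
follow the other, so for some `ω` between the solution stays in `[0, M]`. There it must converge to
`ω`: while it is bounded away from `ω`, its speed is at least of order `α ^ 3`, and `∫ α ^ 3 dτ`
diverges, although only logarithmically.
-/

open scoped NNReal

/-! ### Comparison of scalar solutions -/

section OneSidedComparison

variable {f f' g g' : ℝ → ℝ} {a b : ℝ}

theorem le_of_hasDerivAt_lt_of_eq (hab : a ≤ b)
    (hf : ∀ t ∈ Icc a b, HasDerivAt f (f' t) t) (hg : ∀ t ∈ Icc a b, HasDerivAt g (g' t) t)
    (ha : f a ≤ g a) (h : ∀ t ∈ Icc a b, f t = g t → f' t < g' t) : f b ≤ g b :=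
  image_le_of_deriv_right_lt_deriv_boundary'
    (fun t ht => (hf t ht).continuousAt.continuousWithinAt)
    (fun t ht => (hf t (Ico_subset_Icc_self ht)).hasDerivWithinAt) ha
    (fun t ht => (hg t ht).continuousAt.continuousWithinAt)
    (fun t ht => (hg t (Ico_subset_Icc_self ht)).hasDerivWithinAt)
    (fun t ht => h t (Ico_subset_Icc_self ht)) (right_mem_Icc.2 hab)

theorem le_of_hasDerivAt_le (hab : a ≤ b)
    (hf : ∀ t ∈ Icc a b, HasDerivAt f (f' t) t) (hg : ∀ t ∈ Icc a b, HasDerivAt g (g' t) t)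
    (ha : f a ≤ g a) (h : ∀ t ∈ Icc a b, f' t ≤ g' t) : f b ≤ g b :=
  image_le_of_deriv_right_le_deriv_boundary
    (fun t ht => (hf t ht).continuousAt.continuousWithinAt)
    (fun t ht => (hf t (Ico_subset_Icc_self ht)).hasDerivWithinAt) ha
    (fun t ht => (hg t ht).continuousAt.continuousWithinAt)
    (fun t ht => (hg t (Ico_subset_Icc_self ht)).hasDerivWithinAt)
    (fun t ht => h t (Ico_subset_Icc_self ht)) (right_mem_Icc.2 hab)

theorem tendsto_atTop_of_hasDerivAt_ge {x x' G G' : ℝ → ℝ} {t₀ : ℝ}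
    (hx : ∀ t ≥ t₀, HasDerivAt x (x' t) t) (hG : ∀ t ≥ t₀, HasDerivAt G (G' t) t)
    (hpos : ∀ t ≥ t₀, 0 < G' t) (hlim : Tendsto G atTop atTop)
    (hle : ∀ t ≥ t₀, x t₀ ≤ x t → G' t ≤ x' t) : Tendsto x atTop atTop := by
  have above (t) (ht : t ≥ t₀) : x t₀ ≤ x t :=
    le_of_hasDerivAt_lt_of_eq (f := fun _ => x t₀) ht (fun s _ => hasDerivAt_const s _)
      (fun s hs => hx s hs.1) le_rfl
      fun s hs heq => (hpos s hs.1).trans_le (hle s hs.1 heq.le)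
  have below (t) (ht : t ≥ t₀) : G t + (x t₀ - G t₀) ≤ x t :=
    le_of_hasDerivAt_le (f := fun s => G s + (x t₀ - G t₀)) ht
      (fun s hs => (hG s hs.1).add_const _) (fun s hs => hx s hs.1) (by simp)
      fun s hs => hle s hs.1 (above s hs.1)
  exact tendsto_atTop_mono' _ ((eventually_ge_atTop t₀).mono below)
    (tendsto_atTop_add_const_right _ _ hlim)

end OneSidedComparison

/-- `x` solves `x' = F t x` for all times `t ≥ 0`. Unlike `IsIntegralCurveOn x F (Ici 0)`, this
asks for a two-sided derivative at `0`, as `ShootingConnects` does. -/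
def IsForwardSolution (F : ℝ → ℝ → ℝ) (x : ℝ → ℝ) : Prop :=
  ∀ t ≥ 0, HasDerivAt x (F t (x t)) t

/-- The time-dependent field `F` is Lipschitz in the state on every bounded set of states,
uniformly over bounded intervals of times `t ≥ 0`. -/
def LocallyLipschitzInState (F : ℝ → ℝ → ℝ) : Prop :=
  ∀ b R, ∃ K : ℝ≥0, ∀ t ∈ Icc 0 b, LipschitzOnWith K (F t) (Metric.closedBall 0 R)

theorem exists_forall_mem_closedBall {x y : ℝ → ℝ} {a b : ℝ} (hx : ContinuousOn x (Icc a b))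
    (hy : ContinuousOn y (Icc a b)) :
    ∃ R, ∀ t ∈ Icc a b, x t ∈ Metric.closedBall 0 R ∧ y t ∈ Metric.closedBall 0 R := by
  obtain ⟨R, hR⟩ := isCompact_Icc.exists_bound_of_continuousOn (hx.prodMk hy)
  refine ⟨R, fun t ht => ?_⟩
  simpa only [mem_closedBall_zero_iff, Prod.norm_mk, max_le_iff] using hR t ht

namespace LocallyLipschitzInState

variable {F : ℝ → ℝ → ℝ} {x x' y y' : ℝ → ℝ} {a b : ℝ}

-- Raising the supersolution by `ε * exp ((K + 1) * (t - a))` makes it strict wherever the two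
-- functions touch.
theorem le_of_subsolution_of_supersolution (hF : LocallyLipschitzInState F) (ha : 0 ≤ a)
    (hab : a ≤ b) (hx : ∀ t ∈ Icc a b, HasDerivAt x (x' t) t)
    (hy : ∀ t ∈ Icc a b, HasDerivAt y (y' t) t) (hsub : ∀ t ∈ Icc a b, x' t ≤ F t (x t))
    (hsuper : ∀ t ∈ Icc a b, F t (y t) ≤ y' t) (h : x a ≤ y a) : x b ≤ y b := by
  obtain ⟨R, hR⟩ := exists_forall_mem_closedBall
    (fun t ht => (hx t ht).continuousAt.continuousWithinAt)
    (fun t ht => (hy t ht).continuousAt.continuousWithinAt)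
  obtain ⟨K, hK⟩ := hF b R
  have raised (ε) (hε : 0 < ε) : x b ≤ y b + ε * exp ((K + 1) * (b - a)) := by
    have hexp (t) : HasDerivAt (fun t => ε * exp ((K + 1) * (t - a)))
        (ε * (exp ((K + 1) * (t - a)) * (K + 1))) t := by
      simpa using ((((hasDerivAt_id t).sub_const a).const_mul (K + 1 : ℝ)).exp).const_mul ε
    refine le_of_hasDerivAt_lt_of_eq (g := fun t => y t + ε * exp ((K + 1) * (t - a))) hab hx
      (fun t ht => (hy t ht).add (hexp t)) (by simpa using h.trans (by linarith))
      fun t ht heq => ?_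
    have hgap : 0 < ε * exp ((K + 1) * (t - a)) := by positivity
    have hlip : F t (x t) - F t (y t) ≤ K * (x t - y t) := by
      have := (hK t ⟨ha.trans ht.1, ht.2⟩).dist_le_mul _ (hR t ht).1 _ (hR t ht).2
      rw [Real.dist_eq, Real.dist_eq, heq, add_sub_cancel_left, abs_of_pos hgap] at this
      rw [heq, add_sub_cancel_left]
      exact (le_abs_self _).trans this
    rw [heq, add_sub_cancel_left] at hlip
    have := hsub t ht
    rw [heq] at this
    linarith [hsuper t ht]
  refine le_of_forall_pos_le_add fun δ hδ => ?_
  simpa [exp_ne_zero] using raised (δ / exp ((K + 1) * (b - a))) (by positivity)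

theorem eqOn_of_eq_right (hF : LocallyLipschitzInState F) (ha : 0 ≤ a)
    (hx : ∀ t ∈ Icc a b, HasDerivAt x (F t (x t)) t)
    (hy : ∀ t ∈ Icc a b, HasDerivAt y (F t (y t)) t) (h : x b = y b) : EqOn x y (Icc a b) := by
  have hxc : ContinuousOn x (Icc a b) := fun t ht => (hx t ht).continuousAt.continuousWithinAt
  have hyc : ContinuousOn y (Icc a b) := fun t ht => (hy t ht).continuousAt.continuousWithinAt
  obtain ⟨R, hR⟩ := exists_forall_mem_closedBall hxc hyc
  obtain ⟨K, hK⟩ := hF b R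
  exact ODE_solution_unique_of_mem_Icc_left
    (fun t ht => hK t ⟨ha.trans ht.1.le, ht.2⟩) hxc
    (fun t ht => (hx t (Ioc_subset_Icc_self ht)).hasDerivWithinAt)
    (fun t ht => (hR t (Ioc_subset_Icc_self ht)).1) hyc
    (fun t ht => (hy t (Ioc_subset_Icc_self ht)).hasDerivWithinAt)
    (fun t ht => (hR t (Ioc_subset_Icc_self ht)).2) h

end LocallyLipschitzInState

namespace IsForwardSolution

variable {F G : ℝ → ℝ → ℝ} {x y : ℝ → ℝ} {a b m : ℝ}

theorem le_of_field_le (hF : LocallyLipschitzInState F) (hx : IsForwardSolution F x)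
    (hy : IsForwardSolution G y) (hFG : ∀ t ≥ 0, F t (y t) ≤ G t (y t)) (h : x 0 ≤ y 0)
    (hb : 0 ≤ b) : x b ≤ y b :=
  hF.le_of_subsolution_of_supersolution le_rfl hb (fun t ht => hx t ht.1)
    (fun t ht => hy t ht.1) (fun _ _ => le_rfl) (fun t ht => hFG t ht.1) h

theorem le_const (hF : LocallyLipschitzInState F) (hx : IsForwardSolution F x) (ha : 0 ≤ a)
    (hab : a ≤ b) (hm : ∀ t ∈ Icc a b, F t m ≤ 0) (h : x a ≤ m) : x b ≤ m :=
  hF.le_of_subsolution_of_supersolution (y := fun _ => m) ha hab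
    (fun t ht => hx t (ha.trans ht.1)) (fun t _ => hasDerivAt_const t m) (fun _ _ => le_rfl) hm h

theorem const_le (hF : LocallyLipschitzInState F) (hx : IsForwardSolution F x) (ha : 0 ≤ a)
    (hab : a ≤ b) (hm : ∀ t ∈ Icc a b, 0 ≤ F t m) (h : m ≤ x a) : m ≤ x b :=
  hF.le_of_subsolution_of_supersolution (x := fun _ => m) ha hab
    (fun t _ => hasDerivAt_const t m) (fun t ht => hx t (ha.trans ht.1)) hm (fun _ _ => le_rfl) h

theorem eq_of_eq_zero (hF : LocallyLipschitzInState F) (hx : IsForwardSolution F x)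
    (hy : IsForwardSolution F y) (h : x 0 = y 0) (hb : 0 ≤ b) : x b = y b :=
  le_antisymm (hx.le_of_field_le hF hy (fun _ _ => le_rfl) h.le hb)
    (hy.le_of_field_le hF hx (fun _ _ => le_rfl) h.ge hb)

theorem lt_of_lt_zero (hF : LocallyLipschitzInState F) (hx : IsForwardSolution F x)
    (hy : IsForwardSolution F y) (h : x 0 < y 0) (hb : 0 ≤ b) : x b < y b := by
  refine (hx.le_of_field_le hF hy (fun _ _ => le_rfl) h.le hb).lt_of_ne fun heq => h.ne ?_
  exact hF.eqOn_of_eq_right le_rfl (fun t ht => hx t ht.1) (fun t ht => hy t ht.1) heq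
    (left_mem_Icc.2 hb)

theorem const_lt (hF : LocallyLipschitzInState F) (hx : IsForwardSolution F x) (hb : 0 < b)
    (hm : ∀ t ∈ Icc 0 b, 0 ≤ F t m) (hmb : 0 < F b m) (h : m ≤ x 0) : m < x b := by
  have above (t) (ht : t ∈ Icc 0 b) : m ≤ x t :=
    hx.const_le hF le_rfl ht.1 (fun s hs => hm s ⟨hs.1, hs.2.trans ht.2⟩) h
  refine (above b (right_mem_Icc.2 hb.le)).lt_of_ne fun heq => ?_
  have hderiv : deriv (fun t => x t - m) b > 0 := by
    rw [((hx b hb.le).sub_const m).deriv, ← heq]; exact hmb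
  have hneg := (eventually_nhdsWithin_sign_eq_of_deriv_pos hderiv (by simp [heq])).filter_mono
    (nhdsWithin_le_nhds (s := Iio b))
  obtain ⟨t, hsign, ht⟩ := (hneg.and (Ioo_mem_nhdsLT hb)).exists
  rw [sign_neg (sub_neg.2 ht.2), sign_eq_neg_one_iff] at hsign
  linarith [above t ⟨ht.1.le, ht.2.le⟩]

end IsForwardSolution

/-! ### Global solutions depending on a parameter -/

section GlobalExistence

variable {E : Type*} [NormedAddCommGroup E] [NormedSpace ℝ E] {F : ℝ → E → E} {K C : ℝ≥0}

theorem exists_hasDerivAt_on_Ioo [CompleteSpace E] (hlip : ∀ t, LipschitzWith K (F t))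
    (hcont : ∀ x, Continuous fun t => F t x) (hbdd : ∀ t x, ‖F t x‖ ≤ C) (x₀ : E) {T : ℝ}
    (hT : 0 ≤ T) : ∃ x : ℝ → E, x 0 = x₀ ∧ ∀ t ∈ Ioo (-T) T, HasDerivAt x (F t (x t)) t := by
  have hPL : IsPicardLindelof F (tmin := -T) (tmax := T) ⟨0, by simpa⟩ x₀ (C * T.toNNReal) 0 C K :=
    { lipschitzOnWith := fun t _ => (hlip t).lipschitzOnWith
      continuousOn := fun x _ => (hcont x).continuousOn
      norm_le := fun t _ x _ => hbdd t x
      mul_max_le := by simp [hT] }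
  obtain ⟨x, hx₀, hx⟩ := hPL.exists_eq_forall_mem_Icc_hasDerivWithinAt₀
  exact ⟨x, hx₀, fun t ht =>
    (hx t (Ioo_subset_Icc_self ht)).hasDerivAt (Icc_mem_nhds ht.1 ht.2)⟩

theorem exists_isIntegralCurve_of_bounded [CompleteSpace E] (hlip : ∀ t, LipschitzWith K (F t))
    (hcont : ∀ x, Continuous fun t => F t x) (hbdd : ∀ t x, ‖F t x‖ ≤ C) (x₀ : E) :
    ∃ x : ℝ → E, x 0 = x₀ ∧ IsIntegralCurve x F := by
  choose X hX₀ hX using fun n : ℕ => exists_hasDerivAt_on_Ioo hlip hcont hbdd x₀ n.cast_nonneg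
  have agree {m n : ℕ} (hmn : m ≤ n) {t : ℝ} (ht : |t| < m) : X m t = X n t := by
    have hle : (m : ℝ) ≤ n := Nat.cast_le.2 hmn
    exact ODE_solution_unique_of_mem_Ioo (v := F) (s := fun _ => univ) (t₀ := 0)
      (fun t _ => (hlip t).lipschitzOnWith)
      (abs_lt.1 (abs_zero.trans_lt ((abs_nonneg t).trans_lt ht)))
      (fun s hs => ⟨hX m s hs, trivial⟩)
      (fun s hs => ⟨hX n s (Ioo_subset_Ioo (neg_le_neg hle) hle hs), trivial⟩)
      ((hX₀ m).trans (hX₀ n).symm) (abs_lt.1 ht)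
  have lt_floor (t : ℝ) : |t| < ↑(⌊|t|⌋₊ + 1) := by exact_mod_cast Nat.lt_floor_add_one |t|
  refine ⟨fun t => X (⌊|t|⌋₊ + 1) t, hX₀ _, fun t => ?_⟩
  have hglue : (fun s => X (⌊|s|⌋₊ + 1) s) =ᶠ[𝓝 t] X (⌊|t|⌋₊ + 1) := by
    filter_upwards [continuous_abs.continuousAt.eventually_lt_const (lt_floor t)] with s hs
    exact agree (Nat.succ_le_of_lt ((Nat.floor_lt (abs_nonneg s)).2 hs)) (lt_floor s)
  exact (hX _ t (abs_lt.1 (lt_floor t))).congr_of_eventuallyEq hglue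

end GlobalExistence

/-- Appending the parameter to the state turns continuous dependence on the parameter into
Gronwall's inequality for a single field. -/
theorem exists_isIntegralCurve_family_of_bounded {P E : Type*} [NormedAddCommGroup P]
    [NormedSpace ℝ P] [NormedAddCommGroup E] [NormedSpace ℝ E] [CompleteSpace E]
    {F : P → ℝ → E → E} {K C : ℝ≥0}
    (hlip : ∀ t, LipschitzWith K fun q : P × E => F q.1 t q.2)
    (hcont : ∀ p x, Continuous fun t => F p t x) (hbdd : ∀ p t x, ‖F p t x‖ ≤ C) (x₀ : E) :
    ∃ X : P → ℝ → E, (∀ p, X p 0 = x₀) ∧ (∀ p, IsIntegralCurve (X p) (F p)) ∧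
      ∀ t ≥ 0, Continuous fun p => X p t := by
  have hlipState (p : P) (t : ℝ) : LipschitzWith K (F p t) :=
    mul_one K ▸ (hlip t).comp (LipschitzWith.prodMk_left p)
  choose X hX₀ hX using fun p =>
    exists_isIntegralCurve_of_bounded (hlipState p) (hcont p) (hbdd p) x₀
  have hlipJoint (t : ℝ) : LipschitzWith K fun q : P × E => ((0 : P), F q.1 t q.2) := by
    simpa using (LipschitzWith.const (0 : P)).prodMk (hlip t)
  have hderiv (p : P) (t : ℝ) :
      HasDerivAt (fun s => (p, X p s)) ((0 : P), F p t (X p t)) t :=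
    (hasDerivAt_const t p).prodMk (hX p t)
  refine ⟨X, hX₀, hX, fun t ht => ?_⟩
  have hlipAt : LipschitzWith (Real.toNNReal (exp (K * t))) fun p => X p t := by
    refine LipschitzWith.of_dist_le_mul fun p q => ?_
    have := dist_le_of_trajectories_ODE hlipJoint
      (fun s _ => (hderiv p s).continuousAt.continuousWithinAt)
      (fun s _ => (hderiv p s).hasDerivWithinAt)
      (fun s _ => (hderiv q s).continuousAt.continuousWithinAt)
      (fun s _ => (hderiv q s).hasDerivWithinAt)
      (δ := dist p q) (by simp [hX₀]) t (right_mem_Icc.2 ht)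
    rw [sub_zero, mul_comm] at this
    rw [Real.coe_toNNReal _ (exp_pos _).le]
    exact (le_max_right _ _).trans this
  exact hlipAt.continuous

theorem exists_forall_mem_Icc_of_escape {Ω : Type*} [TopologicalSpace Ω] {S : Set Ω}
    {X : Ω → ℝ → ℝ} {p q : Ω} {m M : ℝ} (hS : IsPreconnected S)
    (hcont : ∀ t ≥ 0, Continuous fun ω => X ω t)
    (hp : p ∈ S) (hpM : ∃ t ≥ 0, M < X p t) (hq : q ∈ S) (hqm : ∃ t ≥ 0, X q t < m)
    (hup : ∀ ω ∈ S, ∀ s ≥ 0, M < X ω s → ∀ t ≥ s, m ≤ X ω t)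
    (hdown : ∀ ω ∈ S, ∀ s ≥ 0, X ω s < m → ∀ t ≥ s, X ω t ≤ M) :
    ∃ ω ∈ S, ∀ t ≥ 0, X ω t ∈ Icc m M := by
  have openAbove : IsOpen {ω | ∃ t ≥ 0, M < X ω t} :=
    isOpen_iff_eventually.2 fun _ ⟨t, ht, h⟩ =>
      ((hcont t ht).continuousAt.eventually_const_lt h).mono fun _ h => ⟨t, ht, h⟩
  have openBelow : IsOpen {ω | ∃ t ≥ 0, X ω t < m} :=
    isOpen_iff_eventually.2 fun _ ⟨t, ht, h⟩ =>
      ((hcont t ht).continuousAt.eventually_lt_const h).mono fun _ h => ⟨t, ht, h⟩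
  by_contra! hescape
  obtain ⟨ω, hω, ⟨s, hs, hsM⟩, ⟨t, ht, htm⟩⟩ := hS _ _ openAbove openBelow
    (fun ω hω => by
      obtain ⟨t, ht, hout⟩ := hescape ω hω
      rw [mem_Icc, not_and_or, not_le, not_le] at hout
      exact hout.symm.imp (fun h => ⟨t, ht, h⟩) fun h => ⟨t, ht, h⟩) ⟨p, hp, hpM⟩ ⟨q, hq, hqm⟩
  rcases le_total s t with hst | hts
  · exact (hup ω hω s hs hsM t hst).not_gt htm
  · exact (hdown ω hω t ht htm s hts).not_gt hsM

/-! ### The spiral field -/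

section VectorField

variable {ω κ x a : ℝ}

theorem contDiff_spiralL : ContDiff ℝ 1 fun q : ℝ × ℝ × ℝ => spiralL q.1 q.2.1 q.2.2 := by
  have hrpow : ContDiff ℝ 1 fun s : ℝ => s ^ (3 / 2 : ℝ) :=
    contDiff_rpow_const_of_le (n := 1) (by norm_num)
  have : ContDiff ℝ 1 fun q : ℝ × ℝ × ℝ => (q.2.2 ^ 2 + q.2.1 ^ 2) ^ (3 / 2 : ℝ) :=
    hrpow.comp (by fun_prop)
  unfold spiralL
  fun_prop

theorem exists_lipschitzOnWith_spiralL (R : ℝ) : ∃ K : ℝ≥0, ∀ a ∈ Metric.closedBall 0 R,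
    LipschitzOnWith K (fun q : ℝ × ℝ => spiralL q.1 q.2 a) (Metric.closedBall 0 R) := by
  obtain ⟨K, hK⟩ := contDiff_spiralL.locallyLipschitz.locallyLipschitzOn
    |>.exists_lipschitzOnWith_of_compact (isCompact_closedBall (0 : ℝ × ℝ × ℝ) R)
  refine ⟨K, fun a ha q hq r hr => ?_⟩
  rw [mem_closedBall_zero_iff, Prod.norm_def, max_le_iff] at hq hr
  rw [mem_closedBall_zero_iff] at ha
  have hmem {q : ℝ × ℝ} (hq : ‖q.1‖ ≤ R ∧ ‖q.2‖ ≤ R) :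
      (q.1, q.2, a) ∈ Metric.closedBall (0 : ℝ × ℝ × ℝ) R := by
    simp only [mem_closedBall_zero_iff, Prod.norm_mk, max_le_iff]
    exact ⟨hq.1, hq.2, ha⟩
  simpa [Prod.edist_eq] using hK (hmem hq) (hmem hr)

theorem spiralL_eq_sqrt (ω x a : ℝ) : spiralL ω x a =
    √(a ^ 2 + x ^ 2) ^ 2 * (√(a ^ 2 + x ^ 2) - ω) - 2 * a ^ 3 * x - a * x ^ 3 := by
  have hs : 0 ≤ a ^ 2 + x ^ 2 := by positivity
  have hpow : (a ^ 2 + x ^ 2) ^ ((3 : ℝ) / 2) = √(a ^ 2 + x ^ 2) ^ 3 := by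
    rw [Real.sqrt_eq_rpow, ← Real.rpow_mul_natCast hs]
    norm_num
  rw [spiralL, hpow]
  linear_combination ω * Real.sq_sqrt hs

theorem spiralL_sub_spiralL (ω ω' x a : ℝ) :
    spiralL ω x a - spiralL ω' x a = (ω' - ω) * (a ^ 2 + x ^ 2) := by
  unfold spiralL
  ring

theorem spiralL_zero_left (ω : ℝ) (ha : 0 ≤ a) : spiralL ω 0 a = a ^ 2 * (a - ω) := by
  simp [spiralL_eq_sqrt, Real.sqrt_sq ha]

theorem spiralL_zero_right (ω : ℝ) (hx : 0 ≤ x) : spiralL ω x 0 = x ^ 2 * (x - ω) := by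
  simp [spiralL_eq_sqrt, Real.sqrt_sq hx]

theorem spiralL_le_neg_mul_sq (hx : 0 ≤ x) (ha : 0 ≤ a) (hκ : 0 ≤ κ) (h : a + x + κ ≤ ω) :
    spiralL ω x a ≤ -(κ * a ^ 2) := by
  rw [spiralL_eq_sqrt]
  have hs : √(a ^ 2 + x ^ 2) ≤ a + x :=
    Real.sqrt_le_iff.2 ⟨by positivity, by nlinarith [mul_nonneg ha hx]⟩
  have hsq : √(a ^ 2 + x ^ 2) ^ 2 = a ^ 2 + x ^ 2 := Real.sq_sqrt (by positivity)
  have hcubic : 0 ≤ 2 * a ^ 3 * x + a * x ^ 3 := by positivity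
  nlinarith [mul_nonneg hκ (sq_nonneg x), sq_nonneg (√(a ^ 2 + x ^ 2))]

theorem mul_sq_le_spiralL (hx : 0 ≤ x) (ha : 0 ≤ a) (hκ : 0 ≤ κ)
    (h : ω + κ ≤ (1 - 2 * a) * √(a ^ 2 + x ^ 2)) : κ * a ^ 2 ≤ spiralL ω x a := by
  rw [spiralL_eq_sqrt]
  have hsq : √(a ^ 2 + x ^ 2) ^ 2 = a ^ 2 + x ^ 2 := Real.sq_sqrt (by positivity)
  have hxs : x ≤ √(a ^ 2 + x ^ 2) := Real.le_sqrt_of_sq_le (by nlinarith)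
  calc κ * a ^ 2 ≤ √(a ^ 2 + x ^ 2) ^ 2 * (√(a ^ 2 + x ^ 2) - ω - 2 * a * x) := by
        rw [hsq]
        nlinarith [mul_le_mul_of_nonneg_left hxs ha, mul_nonneg hκ (sq_nonneg x)]
    _ ≤ _ := by
        have : 0 ≤ a * x ^ 3 := by positivity
        linear_combination this - 2 * a * x * hsq

theorem spiralL_one_neg (hω : 0 ≤ ω) (ha : 19 / 20 ≤ a) : spiralL ω 1 a < 0 := by
  have : 0 ≤ a := by linarith
  have hb : 361 / 400 ≤ a ^ 2 := by nlinarith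
  have hcube : √(a ^ 2 + 1) ^ 3 < a * (2 * a ^ 2 + 1) := by
    refine lt_of_pow_lt_pow_left₀ 2 (by positivity) ?_
    rw [← pow_mul, mul_comm 3 2, pow_mul, Real.sq_sqrt (by positivity), mul_pow]
    nlinarith [pow_nonneg (sub_nonneg.2 hb) 2, pow_nonneg (sub_nonneg.2 hb) 3]
  rw [spiralL_eq_sqrt, one_pow, one_pow]
  nlinarith [mul_nonneg (sq_nonneg √(a ^ 2 + 1)) hω]

theorem spiralL_pos (hω : 0 ≤ ω) (ha₀ : 0 ≤ a) (ha : a ≤ 19 / 20) (hx : 20 * ω + 20 ≤ x) :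
    0 < spiralL ω x a := by
  have hsq : √(a ^ 2 + x ^ 2) ^ 2 = a ^ 2 + x ^ 2 := Real.sq_sqrt (by positivity)
  have hxs : x ≤ √(a ^ 2 + x ^ 2) := Real.le_sqrt_of_sq_le (by nlinarith)
  have hL : spiralL ω x a =
      √(a ^ 2 + x ^ 2) ^ 2 * (√(a ^ 2 + x ^ 2) - ω - a * x) - a ^ 2 * (a * x) := by
    rw [spiralL_eq_sqrt]
    linear_combination a * x * hsq
  rw [hL]
  generalize √(a ^ 2 + x ^ 2) = s at *
  have hgap : 1 ≤ s - ω - a * x := by nlinarith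
  have hprod : a * x ≤ s ^ 2 / 2 := by nlinarith [sq_nonneg (a - x)]
  have hs : 0 < s ^ 2 := by nlinarith
  have hmain : s ^ 2 ≤ s ^ 2 * (s - ω - a * x) := le_mul_of_one_le_right hs.le hgap
  have herr : a ^ 2 * (a * x) ≤ 1 * (s ^ 2 / 2) :=
    mul_le_mul (by nlinarith) hprod (mul_nonneg ha₀ (by linarith)) zero_le_one
  linarith

theorem eventually_le_of_hasStrictFDerivAt {E : Type*} [NormedAddCommGroup E] [NormedSpace ℝ E]
    {f : ℝ × E → ℝ} {f' : ℝ × E →L[ℝ] ℝ} {r : ℝ} {e : E} (hf : HasStrictFDerivAt f f' (r, e))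
    (hpos : 0 < f' (1, 0)) :
    ∀ᶠ q : ℝ × ℝ × E in 𝓝 (r, r, e), q.1 ≤ q.2.1 → f (q.1, q.2.2) ≤ f (q.2.1, q.2.2) := by
  have hlim : Tendsto (fun q : ℝ × ℝ × E => ((q.2.1, q.2.2), (q.1, q.2.2))) (𝓝 (r, r, e))
      (𝓝 ((r, e), (r, e))) := by
    refine Continuous.tendsto' (by fun_prop) _ _ rfl
  filter_upwards [hlim.eventually (hf.isLittleO.def hpos)] with ⟨x, y, a⟩ hxy hle
  have hlin : f' (y - x, 0) = (y - x) * f' (1, 0) := by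
    rw [← smul_eq_mul, ← map_smul]; simp
  simp only [Prod.mk_sub_mk, sub_self, hlin, Prod.norm_mk, norm_zero,
    Real.norm_eq_abs, abs_of_nonneg (sub_nonneg.2 hle), max_eq_left (sub_nonneg.2 hle)] at hxy
  linarith [(abs_le.1 hxy).1]

/-- At infinite radius the equilibrium `ω` is repelling: the derivative of `spiralL` in `ℓ` at
`(ω, ω, 0)` is `ω ^ 2`. -/
theorem eventually_spiralL_le_spiralL (hω : 0 < ω) :
    ∀ᶠ q : ℝ × ℝ × ℝ in 𝓝 (ω, ω, 0),
      q.1 ≤ q.2.1 → spiralL ω q.1 q.2.2 ≤ spiralL ω q.2.1 q.2.2 := by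
  have hsmooth : ContDiff ℝ 1 fun q : ℝ × ℝ => spiralL ω q.1 q.2 :=
    contDiff_spiralL.comp (g := fun q : ℝ × ℝ × ℝ => spiralL q.1 q.2.1 q.2.2)
      (f := fun q : ℝ × ℝ => (ω, q)) (by fun_prop)
  have hstrict := hsmooth.contDiffAt.hasStrictFDerivAt (x := (ω, 0)) one_ne_zero
  refine eventually_le_of_hasStrictFDerivAt hstrict ?_
  have hchain := hstrict.hasFDerivAt.comp_hasDerivAt ω
    ((hasDerivAt_id ω).prodMk (hasDerivAt_const ω (0 : ℝ)))
  have hexplicit : HasDerivAt (fun x => spiralL ω x 0) (ω ^ 2) ω := by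
    have hpoly : HasDerivAt (fun x => x ^ 2 * (x - ω)) (ω ^ 2) ω := by
      simpa using (hasDerivAt_pow 2 ω).fun_mul ((hasDerivAt_id ω).sub_const ω)
    exact hpoly.congr_of_eventuallyEq ((eventually_gt_nhds hω).mono fun x hx =>
      spiralL_zero_right ω hx.le)
  rw [hchain.unique hexplicit]
  positivity

end VectorField

/-- The solution of `α' = -α ^ 4` with `α 0 = p ^ (-1 / 3)`. In the geometric variables `p = R ^ 3`
and `p + 3 * t = r ^ 3`, so that this is `1 / r`. -/
noncomputable def invRadius (p t : ℝ) : ℝ := (p + 3 * t) ^ (-(1 / 3) : ℝ)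

section InvRadius

variable {p s t : ℝ}

theorem invRadius_pos (hp : 0 < p) (ht : 0 ≤ t) : 0 < invRadius p t :=
  Real.rpow_pos_of_pos (by linarith) _

theorem invRadius_le_invRadius (hp : 0 < p) (hs : 0 ≤ s) (hst : s ≤ t) :
    invRadius p t ≤ invRadius p s :=
  Real.rpow_le_rpow_of_nonpos (by linarith) (by linarith) (by norm_num)

theorem invRadius_add (p s t : ℝ) : invRadius p (t + s) = invRadius (p + 3 * s) t := by
  unfold invRadius
  ring_nf

theorem invRadius_inv_cube_zero {c : ℝ} (hc : 0 ≤ c) : invRadius (c ^ 3)⁻¹ 0 = c := by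
  rw [invRadius, mul_zero, add_zero, Real.rpow_neg (by positivity), Real.inv_rpow (by positivity),
    inv_inv, ← Real.rpow_natCast_mul hc]
  norm_num

theorem tendsto_invRadius (p : ℝ) : Tendsto (invRadius p) atTop (𝓝 0) :=
  (tendsto_rpow_neg_atTop (by norm_num)).comp
    (tendsto_atTop_add_const_left _ _ (tendsto_id.const_mul_atTop (by norm_num)))

theorem continuous_invRadius_max_zero (hp : 0 < p) : Continuous fun t => invRadius p (max t 0) :=
  Continuous.rpow_const (by fun_prop) fun t => Or.inl (by linarith [le_max_right t 0])

theorem hasDerivAt_add_three_mul (p t : ℝ) : HasDerivAt (fun t => p + 3 * t) 3 t := by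
  simpa using ((hasDerivAt_id t).const_mul 3).const_add p

theorem hasDerivAt_invRadius (hp : 0 < p) (ht : 0 ≤ t) :
    HasDerivAt (invRadius p) (spiralA (invRadius p t)) t := by
  have hr : 0 < p + 3 * t := by linarith
  refine ((hasDerivAt_add_three_mul p t).rpow_const (p := -(1 / 3)) (Or.inl hr.ne')).congr_deriv ?_
  rw [spiralA, invRadius, ← Real.rpow_mul_natCast hr.le]
  norm_num

theorem hasDerivAt_log_add_three_mul (hp : 0 < p) (ht : 0 ≤ t) :
    HasDerivAt (fun t => log (p + 3 * t) / 3) (invRadius p t ^ 3) t := by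
  have hr : 0 < p + 3 * t := by linarith
  refine (((hasDerivAt_add_three_mul p t).log hr.ne').div_const 3).congr_deriv ?_
  rw [invRadius, ← Real.rpow_mul_natCast hr.le,
    show -(1 / 3 : ℝ) * (3 : ℕ) = -1 by norm_num, Real.rpow_neg_one]
  field_simp

theorem tendsto_atTop_of_mul_invRadius_pow_le {κ t₀ : ℝ} {x x' : ℝ → ℝ} (hp : 0 < p)
    (ht₀ : 0 ≤ t₀) (hκ : 0 < κ) (hx : ∀ t ≥ t₀, HasDerivAt x (x' t) t)
    (hle : ∀ t ≥ t₀, x t₀ ≤ x t → κ * invRadius p t ^ 3 ≤ x' t) : Tendsto x atTop atTop := by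
  refine tendsto_atTop_of_hasDerivAt_ge (G := fun t => κ * (log (p + 3 * t) / 3)) hx
    (fun t ht => (hasDerivAt_log_add_three_mul hp (ht₀.trans ht)).const_mul κ)
    (fun t ht => mul_pos hκ (pow_pos (invRadius_pos hp (ht₀.trans ht)) 3)) ?_ hle
  have hlin : Tendsto (fun t => p + 3 * t) atTop atTop :=
    tendsto_atTop_add_const_left _ _ (tendsto_id.const_mul_atTop (by norm_num))
  exact ((tendsto_log_atTop.comp hlin).atTop_div_const (by norm_num)).const_mul_atTop hκ

theorem locallyLipschitzInState_spiralA : LocallyLipschitzInState fun _ => spiralA := by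
  intro _ R
  have hsmooth : ContDiff ℝ 1 spiralA := by unfold spiralA; fun_prop
  obtain ⟨K, hK⟩ := hsmooth.locallyLipschitz.locallyLipschitzOn
    |>.exists_lipschitzOnWith_of_compact (isCompact_closedBall 0 R)
  exact ⟨K, fun _ _ => hK⟩

theorem eq_invRadius_of_hasDerivAt {α : ℝ → ℝ} (hp : 0 < p) (h₀ : α 0 = invRadius p 0)
    (hα : ∀ t ≥ 0, HasDerivAt α (spiralA (α t)) t) (ht : 0 ≤ t) : α t = invRadius p t :=
  IsForwardSolution.eq_of_eq_zero locallyLipschitzInState_spiralA hα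
    (fun _ hs => hasDerivAt_invRadius hp hs) h₀ ht

end InvRadius

/-- The spiral field with `α` replaced by its explicit value at time `t`. -/
noncomputable def spiralField (p ω t x : ℝ) : ℝ := spiralL ω x (invRadius p t)

/-! ### Uniqueness and monotonicity of the frequency -/

section Uniqueness

variable {p ω ω' : ℝ} {x y : ℝ → ℝ}

theorem locallyLipschitzInState_spiralField (hp : 0 < p) (ω : ℝ) :
    LocallyLipschitzInState (spiralField p ω) := by
  intro b R
  obtain ⟨K, hK⟩ := exists_lipschitzOnWith_spiralL (max |ω| (max R (invRadius p 0)))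
  refine ⟨K, fun t ht => ?_⟩
  have hα : invRadius p t ∈ Metric.closedBall 0 (max |ω| (max R (invRadius p 0))) := by
    rw [mem_closedBall_zero_iff, Real.norm_of_nonneg (invRadius_pos hp ht.1).le]
    exact (invRadius_le_invRadius hp le_rfl ht.1).trans (by simp)
  have hmaps : MapsTo (Prod.mk ω) (Metric.closedBall (0 : ℝ) R)
      (Metric.closedBall 0 (max |ω| (max R (invRadius p 0)))) := by
    intro x hx
    rw [mem_closedBall_zero_iff] at hx ⊢
    exact max_le_max le_rfl (hx.trans (le_max_left _ _))
  exact mul_one K ▸ (hK _ hα).comp (LipschitzWith.prodMk_left ω).lipschitzOnWith hmaps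

theorem IsForwardSolution.le_of_frequency_le (hp : 0 < p) (hω : ω ≤ ω')
    (hx : IsForwardSolution (spiralField p ω) x) (hy : IsForwardSolution (spiralField p ω') y)
    (h : y 0 ≤ x 0) {t : ℝ} (ht : 0 ≤ t) : y t ≤ x t := by
  refine hy.le_of_field_le (locallyLipschitzInState_spiralField hp ω') hx (fun s _ => ?_) h ht
  refine sub_nonneg.1 ?_
  rw [spiralField, spiralField, spiralL_sub_spiralL]
  exact mul_nonneg (sub_nonneg.2 hω) (by positivity)

theorem IsForwardSolution.not_tendsto_frequency_of_lt (hp : 0 < p) (hω : 0 < ω)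
    (hx : IsForwardSolution (spiralField p ω) x) (hy : IsForwardSolution (spiralField p ω) y)
    (h : x 0 < y 0) (hxω : Tendsto x atTop (𝓝 ω)) : ¬ Tendsto y atTop (𝓝 ω) := by
  intro hyω
  have hrepel := (hxω.prodMk_nhds (hyω.prodMk_nhds (tendsto_invRadius p))).eventually
    (eventually_spiralL_le_spiralL hω)
  obtain ⟨T, hT⟩ := eventually_atTop.1 (hrepel.and (eventually_ge_atTop 0))
  have hlt {t : ℝ} (ht : 0 ≤ t) : x t < y t :=
    hx.lt_of_lt_zero (locallyLipschitzInState_spiralField hp ω) hy h ht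
  have hgrow (t) (ht : t ≥ T) : y T - x T ≤ y t - x t :=
    le_of_hasDerivAt_le (f := fun _ => y T - x T) (g := y - x) ht (fun s _ => hasDerivAt_const s _)
      (fun s hs => (hy s (hT s hs.1).2).sub (hx s (hT s hs.1).2)) le_rfl
      fun s hs => sub_nonneg.2 ((hT s hs.1).1 (hlt (hT s hs.1).2).le)
  have hlim : y T - x T ≤ ω - ω :=
    ge_of_tendsto (hyω.sub hxω) ((eventually_ge_atTop T).mono hgrow)
  linarith [hlt (hT T le_rfl).2]

theorem IsForwardSolution.frequency_lt_invRadius_zero (hp : 0 < p) (hω : 0 < ω)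
    (hx : IsForwardSolution (spiralField p ω) x) (hx₀ : x 0 ≤ 0) (hxω : Tendsto x atTop (𝓝 ω)) :
    ω < invRadius p 0 := by
  by_contra! hle
  refine hω.not_ge (le_of_tendsto hxω ((eventually_ge_atTop 0).mono fun t ht => ?_))
  refine hx.le_const (locallyLipschitzInState_spiralField hp ω) le_rfl ht (fun s hs => ?_) hx₀
  rw [spiralField, spiralL_zero_left ω (invRadius_pos hp hs.1).le]
  have := invRadius_le_invRadius hp le_rfl hs.1
  exact mul_nonpos_of_nonneg_of_nonpos (sq_nonneg _) (by linarith)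

theorem IsForwardSolution.pos_of_frequency_lt_invRadius {σ : ℝ} (hp : 0 < p) (hσ : 0 < σ)
    (hω : ω < invRadius p σ) (hx : IsForwardSolution (spiralField p ω) x) (hx₀ : 0 ≤ x 0) :
    0 < x σ := by
  have hpos (t) (ht : t ∈ Icc 0 σ) : 0 < spiralField p ω t 0 := by
    rw [spiralField, spiralL_zero_left ω (invRadius_pos hp ht.1).le]
    have := invRadius_le_invRadius hp ht.1 ht.2
    exact mul_pos (pow_pos (invRadius_pos hp ht.1) 2) (by linarith)
  exact hx.const_lt (locallyLipschitzInState_spiralField hp ω) hσ (fun t ht => (hpos t ht).le)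
    (hpos σ (right_mem_Icc.2 hσ.le)) hx₀

theorem IsForwardSolution.shift {σ : ℝ} (hσ : 0 ≤ σ)
    (hx : IsForwardSolution (spiralField p ω) x) :
    IsForwardSolution (spiralField (p + 3 * σ) ω) fun t => x (t + σ) := by
  intro t ht
  have := (hx (t + σ) (add_nonneg ht hσ)).comp_add_const t σ
  rwa [spiralField, invRadius_add] at this

theorem ShootingConnects.exists_isForwardSolution {c : ℝ} (hc : 0 < c)
    (h : ShootingConnects c ω) : ∃ x, x 0 = 0 ∧
      IsForwardSolution (spiralField (c ^ 3)⁻¹ ω) x ∧ Tendsto x atTop (𝓝 ω) := by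
  obtain ⟨x, α, hx₀, hα₀, hx, hα, hxω⟩ := h
  refine ⟨x, hx₀, fun t ht => ?_, hxω⟩
  rw [spiralField, ← eq_invRadius_of_hasDerivAt (inv_pos.2 (pow_pos hc 3))
    (hα₀.trans (invRadius_inv_cube_zero hc.le).symm) hα ht]
  exact hx t ht

theorem ShootingConnects.le_of_same_radius {c : ℝ} (hc : 0 < c) (h : ShootingConnects c ω)
    (h' : ShootingConnects c ω') : ω ≤ ω' := by
  by_contra! hlt
  obtain ⟨x, hx₀, hx, hxω⟩ := h.exists_isForwardSolution hc
  obtain ⟨y, hy₀, hy, hyω⟩ := h'.exists_isForwardSolution hc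
  have hle : ω ≤ ω' := le_of_tendsto_of_tendsto hxω hyω ((eventually_ge_atTop 0).mono fun t ht =>
    hy.le_of_frequency_le (inv_pos.2 (pow_pos hc 3)) hlt.le hx (hx₀.trans hy₀.symm).le ht)
  exact hle.not_gt hlt

-- Started at the time when its `α` has dropped to `c`, the solution for `c'` lies above the one
-- for `c`.
theorem ShootingConnects.frequency_lt {c c' : ℝ} (hc : 0 < c) (hcc' : c < c') (hω : 0 < ω)
    (h : ShootingConnects c ω) (h' : ShootingConnects c' ω') : ω < ω' := by
  by_contra! hle
  have hc' : 0 < c' := hc.trans hcc'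
  have hp : 0 < (c ^ 3)⁻¹ := inv_pos.2 (pow_pos hc 3)
  have hp' : 0 < (c' ^ 3)⁻¹ := inv_pos.2 (pow_pos hc' 3)
  obtain ⟨x, hx₀, hx, hxω⟩ := h.exists_isForwardSolution hc
  obtain ⟨y, hy₀, hy, hyω⟩ := h'.exists_isForwardSolution hc'
  obtain ⟨σ, hσ, hshift⟩ : ∃ σ > 0, (c' ^ 3)⁻¹ + 3 * σ = (c ^ 3)⁻¹ := by
    have : (c' ^ 3)⁻¹ < (c ^ 3)⁻¹ := inv_strictAnti₀ (pow_pos hc 3) (by gcongr)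
    exact ⟨((c ^ 3)⁻¹ - (c' ^ 3)⁻¹) / 3, by linarith, by ring⟩
  have hωσ : ω' < invRadius (c' ^ 3)⁻¹ σ := by
    rw [← zero_add σ, invRadius_add, hshift]
    exact hle.trans_lt (hx.frequency_lt_invRadius_zero hp hω hx₀.le hxω)
  have hstart : x 0 < y (0 + σ) := by
    rw [hx₀, zero_add]
    exact hy.pos_of_frequency_lt_invRadius hp' hσ hωσ hy₀.ge
  have hyσ := hshift ▸ hy.shift hσ.le
  have hyσω : Tendsto (fun t => y (t + σ)) atTop (𝓝 ω') :=
    hyω.comp (tendsto_atTop_add_const_right _ σ tendsto_id)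
  have heq : ω = ω' := le_antisymm (le_of_tendsto_of_tendsto hxω hyσω
    ((eventually_ge_atTop 0).mono fun t ht =>
      hyσ.le_of_frequency_le hp hle hx hstart.le ht)) hle
  subst heq
  exact hx.not_tendsto_frequency_of_lt hp hω hyσ hstart hxω hyσω

end Uniqueness

/-! ### Existence by shooting -/

section Convergence

variable {p M ω c : ℝ} {x : ℝ → ℝ}

theorem IsForwardSolution.eventually_lt (hp : 0 < p) (hx : IsForwardSolution (spiralField p ω) x)
    (hxM : ∀ t ≥ 0, x t ∈ Icc 0 M) (hc : ω < c) : ∀ᶠ t in atTop, x t < c := by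
  have hκ : 0 < (c - ω) / 2 := by linarith
  have hsmall : ∀ᶠ t in atTop, 2 * invRadius p t * M < (c - ω) / 2 ∧ invRadius p t < 1 / 2 := by
    have hlim : Tendsto (fun t => 2 * invRadius p t * M) atTop (𝓝 0) := by
      simpa using ((tendsto_invRadius p).const_mul 2).mul_const M
    exact (hlim.eventually_lt_const hκ).and
      ((tendsto_invRadius p).eventually_lt_const one_half_pos)
  obtain ⟨T, hT⟩ := eventually_atTop.1 (hsmall.and (eventually_ge_atTop 0))
  filter_upwards [eventually_ge_atTop T] with t ht
  by_contra! hct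
  have hgrow (s) (hs : s ≥ t) (hts : x t ≤ x s) :
      (c - ω) / 2 * invRadius p s ^ 3 ≤ spiralField p ω s (x s) := by
    obtain ⟨⟨hαM, hα⟩, hs₀⟩ := hT s (ht.trans hs)
    obtain ⟨hx₀, hxM⟩ := hxM s hs₀
    have hα₀ := (invRadius_pos hp hs₀).le
    have hmod : x s ≤ √(invRadius p s ^ 2 + x s ^ 2) :=
      Real.le_sqrt_of_sq_le (le_add_of_nonneg_left (sq_nonneg _))
    calc (c - ω) / 2 * invRadius p s ^ 3 ≤ (c - ω) / 2 * invRadius p s ^ 2 :=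
          mul_le_mul_of_nonneg_left (pow_le_pow_of_le_one hα₀ (by linarith) (by norm_num)) hκ.le
      _ ≤ _ := mul_sq_le_spiralL hx₀ hα₀ hκ.le (by
          have hbound := mul_le_mul_of_nonneg_left hxM (mul_nonneg zero_le_two hα₀)
          have := mul_le_mul_of_nonneg_left hmod (by linarith : 0 ≤ 1 - 2 * invRadius p s)
          linarith)
  have hblowup := tendsto_atTop_of_mul_invRadius_pow_le hp (hT t ht).2 hκ
    (fun s hs => hx s ((hT t ht).2.trans hs)) hgrow
  obtain ⟨s, hMs, hs⟩ := ((hblowup.eventually_gt_atTop M).and (eventually_ge_atTop 0)).exists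
  exact hMs.not_ge (hxM s hs).2

theorem IsForwardSolution.eventually_gt (hp : 0 < p) (hx : IsForwardSolution (spiralField p ω) x)
    (hx₀ : ∀ t ≥ 0, 0 ≤ x t) (hc : c < ω) : ∀ᶠ t in atTop, c < x t := by
  have hκ : 0 < (ω - c) / 2 := by linarith
  have hsmall : ∀ᶠ t in atTop, invRadius p t < min 1 ((ω - c) / 2) :=
    (tendsto_invRadius p).eventually_lt_const (lt_min one_pos hκ)
  obtain ⟨T, hT⟩ := eventually_atTop.1 (hsmall.and (eventually_ge_atTop 0))
  filter_upwards [eventually_ge_atTop T] with t ht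
  by_contra! hct
  have hdecay (s) (hs : s ≥ t) (hts : -x t ≤ -x s) :
      (ω - c) / 2 * invRadius p s ^ 3 ≤ -spiralField p ω s (x s) := by
    obtain ⟨hα, hs₀⟩ := hT s (ht.trans hs)
    rw [lt_min_iff] at hα
    have hα₀ := (invRadius_pos hp hs₀).le
    have := spiralL_le_neg_mul_sq (ω := ω) (hx₀ s hs₀) hα₀ hκ.le (by linarith)
    calc (ω - c) / 2 * invRadius p s ^ 3 ≤ (ω - c) / 2 * invRadius p s ^ 2 :=
          mul_le_mul_of_nonneg_left (pow_le_pow_of_le_one hα₀ hα.1.le (by norm_num)) hκ.le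
      _ ≤ _ := le_neg.2 this
  have hblowup := tendsto_atTop_of_mul_invRadius_pow_le (x := fun s => -x s) hp (hT t ht).2 hκ
    (fun s hs => (hx s ((hT t ht).2.trans hs)).neg) hdecay
  obtain ⟨s, hneg, hs⟩ := ((hblowup.eventually_gt_atTop 0).and (eventually_ge_atTop 0)).exists
  exact (neg_pos.1 hneg).not_ge (hx₀ s hs)

theorem IsForwardSolution.tendsto_frequency (hp : 0 < p)
    (hx : IsForwardSolution (spiralField p ω) x) (hxM : ∀ t ≥ 0, x t ∈ Icc 0 M) :
    Tendsto x atTop (𝓝 ω) :=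
  tendsto_order.2 ⟨fun _ hc => hx.eventually_gt hp (fun t ht => (hxM t ht).1) hc,
    fun _ hc => hx.eventually_lt hp hxM hc⟩

end Convergence

theorem LocallyLipschitzInState.comp_lipschitzWith {F : ℝ → ℝ → ℝ} {g : ℝ → ℝ} {L : ℝ≥0}
    (hF : LocallyLipschitzInState F) (hg : LipschitzWith L g) :
    LocallyLipschitzInState fun t x => F t (g x) := by
  intro b R
  obtain ⟨C, hC⟩ :=
    (isCompact_closedBall 0 R).exists_bound_of_continuousOn hg.continuous.continuousOn
  obtain ⟨K, hK⟩ := hF b C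
  exact ⟨K * L, fun t ht => (hK t ht).comp hg.lipschitzOnWith fun x hx =>
    mem_closedBall_zero_iff.2 (hC x hx)⟩

theorem lipschitzWith_coe_projIcc {a b : ℝ} (hab : a ≤ b) :
    LipschitzWith 1 fun x => (projIcc a b hab x : ℝ) :=
  LipschitzWith.projIcc hab

theorem lipschitzWith_comp_projIcc_prod {E : Type*} [PseudoEMetricSpace E] {f : ℝ × ℝ → E}
    {K : ℝ≥0} {a b c d : ℝ} (hab : a ≤ b) (hcd : c ≤ d)
    (hf : LipschitzOnWith K f (Icc a b ×ˢ Icc c d)) :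
    LipschitzWith K fun q : ℝ × ℝ => f (projIcc a b hab q.1, projIcc c d hcd q.2) := fun q r =>
  (hf (mk_mem_prod (projIcc a b hab q.1).2 (projIcc c d hcd q.2).2)
    (mk_mem_prod (projIcc a b hab r.1).2 (projIcc c d hcd r.2).2)).trans
    (mul_le_mul_right (max_le_max (by simpa using lipschitzWith_coe_projIcc hab q.1 r.1)
      (by simpa using lipschitzWith_coe_projIcc hcd q.2 r.2)) _)

/-- `spiralField` with the state clamped to `[0, M]`. It is globally Lipschitz, hence has global
solutions, and its solutions that stay in `[0, M]` are solutions of `spiralField`. -/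
noncomputable def clampedField {M : ℝ} (hM : 0 ≤ M) (p ω t x : ℝ) : ℝ :=
  spiralField p ω t (projIcc 0 M hM x)

section Clamped

variable {p M ω s t : ℝ} {hM : 0 ≤ M} {x : ℝ → ℝ}

theorem locallyLipschitzInState_clampedField (hp : 0 < p) (hM : 0 ≤ M) (ω : ℝ) :
    LocallyLipschitzInState (clampedField hM p ω) :=
  (locallyLipschitzInState_spiralField hp ω).comp_lipschitzWith (lipschitzWith_coe_projIcc hM)

theorem clampedField_of_mem {m : ℝ} (hm : m ∈ Icc 0 M) :
    clampedField hM p ω t m = spiralField p ω t m := by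
  rw [clampedField, projIcc_of_mem hM hm]

theorem clampedField_of_nonpos {m : ℝ} (hp : 0 < p) (ht : 0 ≤ t) (hm : m ≤ 0) :
    clampedField hM p ω t m = invRadius p t ^ 2 * (invRadius p t - ω) := by
  rw [clampedField, projIcc_of_le_left hM hm, spiralField,
    spiralL_zero_left ω (invRadius_pos hp ht).le]

theorem IsForwardSolution.clamped_nonneg_of_le_invRadius (hp : 0 < p)
    (hx : IsForwardSolution (clampedField hM p ω) x) (hx₀ : 0 ≤ x 0) (ht : 0 ≤ t)
    (hω : ω ≤ invRadius p t) : 0 ≤ x t := by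
  refine hx.const_le (locallyLipschitzInState_clampedField hp hM ω) le_rfl ht (fun s hs => ?_) hx₀
  rw [clampedField_of_nonpos hp hs.1 le_rfl]
  have := invRadius_le_invRadius hp hs.1 hs.2
  exact mul_nonneg (sq_nonneg _) (by linarith)

theorem IsForwardSolution.clamped_nonpos_of_invRadius_le (hp : 0 < p)
    (hx : IsForwardSolution (clampedField hM p ω) x) (hs : 0 ≤ s)
    (hω : invRadius p s ≤ ω) (hxs : x s ≤ 0) (hst : s ≤ t) : x t ≤ 0 := by
  refine hx.le_const (locallyLipschitzInState_clampedField hp hM ω) hs hst (fun r hr => ?_) hxs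
  rw [clampedField_of_nonpos hp (hs.trans hr.1) le_rfl]
  have := invRadius_le_invRadius hp hs hr.1
  exact mul_nonpos_of_nonneg_of_nonpos (sq_nonneg _) (by linarith)

theorem IsForwardSolution.clamped_nonpos_of_neg (hp : 0 < p)
    (hx : IsForwardSolution (clampedField hM p ω) x) (hx₀ : 0 ≤ x 0) (hs : 0 ≤ s)
    (hxs : x s < 0) (hst : s ≤ t) : x t ≤ 0 := by
  refine hx.clamped_nonpos_of_invRadius_le hp hs ?_ hxs.le hst
  by_contra! hω
  exact hxs.not_ge (hx.clamped_nonneg_of_le_invRadius hp hx₀ hs hω.le)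

-- The field points down at height `1` as long as `19 / 20 ≤ α`, and up at height `M` afterwards.
theorem IsForwardSolution.clamped_ge_of_gt (hp : 0 < p)
    (hx : IsForwardSolution (clampedField hM p ω) x) (hx₀ : x 0 ≤ 1) (hω : 0 ≤ ω)
    (hωM : 20 * ω + 20 ≤ M) (hs : 0 ≤ s) (hxs : M < x s) (hst : s ≤ t) : M ≤ x t := by
  have hlip := locallyLipschitzInState_clampedField hp hM ω
  have hα : invRadius p s < 19 / 20 := by
    by_contra! hα
    refine (by linarith : 1 < x s).not_ge (hx.le_const hlip le_rfl hs (fun r hr => ?_) hx₀)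
    rw [clampedField_of_mem ⟨zero_le_one, by linarith⟩]
    exact (spiralL_one_neg hω (hα.trans (invRadius_le_invRadius hp hr.1 hr.2))).le
  refine hx.const_le hlip hs hst (fun r hr => ?_) hxs.le
  rw [clampedField_of_mem (right_mem_Icc.2 hM)]
  exact (spiralL_pos hω (invRadius_pos hp (hs.trans hr.1)).le
    ((invRadius_le_invRadius hp hs hr.1).trans hα.le) hωM).le

theorem IsForwardSolution.clamped_tendsto_atTop_of_frequency_zero (hp : 0 < p)
    (hx : IsForwardSolution (clampedField hM p 0) x) : Tendsto x atTop atTop := by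
  obtain ⟨T, hT⟩ := eventually_atTop.1 (((tendsto_invRadius p).eventually_lt_const
    (by norm_num : (0 : ℝ) < 1 / 4)).and (eventually_ge_atTop 0))
  refine tendsto_atTop_of_mul_invRadius_pow_le hp (hT T le_rfl).2 one_half_pos
    (fun t ht => hx t (hT t ht).2) fun t ht _ => ?_
  obtain ⟨hα, ht₀⟩ := hT t ht
  have hα₀ := (invRadius_pos hp ht₀).le
  have hmod : invRadius p t ≤ √(invRadius p t ^ 2 + (projIcc 0 M hM (x t) : ℝ) ^ 2) :=
    Real.le_sqrt_of_sq_le (le_add_of_nonneg_right (sq_nonneg _))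
  calc 1 / 2 * invRadius p t ^ 3 = invRadius p t / 2 * invRadius p t ^ 2 := by ring
    _ ≤ _ := mul_sq_le_spiralL (projIcc 0 M hM (x t)).2.1 hα₀ (by linarith) (by nlinarith)

theorem IsForwardSolution.clamped_tendsto_atBot_of_two_mul_le (hp : 0 < p)
    (hx : IsForwardSolution (clampedField hM p ω) x) (hx₀ : x 0 ≤ 0)
    (hω : 2 * invRadius p 0 ≤ ω) : Tendsto x atTop atBot := by
  have hα₀ := invRadius_pos hp le_rfl
  refine tendsto_neg_atTop_iff.1 (tendsto_atTop_of_mul_invRadius_pow_le hp le_rfl one_pos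
    (fun t ht => (hx t ht).neg) fun t ht _ => ?_)
  have hα : invRadius p t ≤ ω - invRadius p t := by
    linarith [invRadius_le_invRadius hp le_rfl ht]
  have hneg := hx.clamped_nonpos_of_invRadius_le hp le_rfl (by linarith) hx₀ ht
  rw [clampedField_of_nonpos hp ht hneg]
  calc 1 * invRadius p t ^ 3 = invRadius p t ^ 2 * invRadius p t := by ring
    _ ≤ invRadius p t ^ 2 * (ω - invRadius p t) := mul_le_mul_of_nonneg_left hα (sq_nonneg _)
    _ = _ := by ring

theorem exists_clampedField_family {W : ℝ} (hp : 0 < p) (hM : 0 ≤ M) (hW : 0 ≤ W) :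
    ∃ X : ℝ → ℝ → ℝ, (∀ ω, X ω 0 = 0) ∧
      (∀ ω ∈ Icc 0 W, IsForwardSolution (clampedField hM p ω) (X ω)) ∧
      ∀ t ≥ 0, Continuous fun ω => X ω t := by
  set α₀ := invRadius p 0
  have hα (t) : invRadius p (max t 0) ∈ Icc 0 α₀ :=
    ⟨(invRadius_pos hp (le_max_right _ _)).le, invRadius_le_invRadius hp le_rfl (le_max_right _ _)⟩
  obtain ⟨C, hC⟩ := (isCompact_Icc.prod (isCompact_Icc.prod isCompact_Icc) :
    IsCompact (Icc 0 W ×ˢ Icc 0 M ×ˢ Icc 0 α₀)).exists_bound_of_continuousOn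
      contDiff_spiralL.continuous.continuousOn
  obtain ⟨K, hK⟩ := exists_lipschitzOnWith_spiralL (max W (max M α₀))
  have hsub : Icc 0 W ×ˢ Icc 0 M ⊆ Metric.closedBall (0 : ℝ × ℝ) (max W (max M α₀)) := by
    rintro q ⟨hq₁, hq₂⟩
    rw [mem_closedBall_zero_iff, Prod.norm_def, Real.norm_of_nonneg hq₁.1,
      Real.norm_of_nonneg hq₂.1]
    exact max_le_max hq₁.2 (hq₂.2.trans (le_max_left _ _))
  have hlip (t : ℝ) : LipschitzWith K fun q : ℝ × ℝ =>
      spiralL (projIcc 0 W hW q.1) (projIcc 0 M hM q.2) (invRadius p (max t 0)) := by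
    have hαt : invRadius p (max t 0) ∈ Metric.closedBall 0 (max W (max M α₀)) := by
      rw [mem_closedBall_zero_iff, Real.norm_of_nonneg (hα t).1]
      exact (hα t).2.trans (by simp)
    exact lipschitzWith_comp_projIcc_prod hW hM ((hK _ hαt).mono hsub)
  obtain ⟨X, hX₀, hX, hXcont⟩ := exists_isIntegralCurve_family_of_bounded
    (F := fun ω t x => spiralL (projIcc 0 W hW ω) (projIcc 0 M hM x) (invRadius p (max t 0)))
    (C := C.toNNReal) hlip
    (fun ω x => contDiff_spiralL.continuous.comp
      (continuous_const.prodMk (continuous_const.prodMk (continuous_invRadius_max_zero hp))))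
    (fun ω t x => (hC (_, _, _) ⟨(projIcc 0 W hW ω).2, (projIcc 0 M hM x).2, hα t⟩).trans
      (Real.le_coe_toNNReal C)) 0
  refine ⟨X, hX₀, fun ω hω t ht => ?_, hXcont⟩
  have := hX ω t
  simp only [projIcc_of_mem hW hω, max_eq_left ht] at this
  exact this

end Clamped

theorem exists_tendsto_frequency {p : ℝ} (hp : 0 < p) : ∃ ω > 0, ∃ x : ℝ → ℝ, x 0 = 0 ∧
    IsForwardSolution (spiralField p ω) x ∧ Tendsto x atTop (𝓝 ω) := by
  set W := 2 * invRadius p 0 with hWdef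
  have hW : 0 < W := mul_pos two_pos (invRadius_pos hp le_rfl)
  set M := 20 * W + 20 with hMdef
  have hM : 0 ≤ M := by positivity
  obtain ⟨X, hX₀, hX, hXcont⟩ := exists_clampedField_family hp hM hW.le
  have hup : ∃ t ≥ 0, M < X 0 t := by
    have hlim := (hX 0 (left_mem_Icc.2 hW.le)).clamped_tendsto_atTop_of_frequency_zero hp
    obtain ⟨t, hMt, ht⟩ := ((hlim.eventually_gt_atTop M).and (eventually_ge_atTop 0)).exists
    exact ⟨t, ht, hMt⟩
  have hdown : ∃ t ≥ 0, X W t < 0 := by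
    have hlim := (hX W (right_mem_Icc.2 hW.le)).clamped_tendsto_atBot_of_two_mul_le hp
      (hX₀ W).le hWdef.ge
    obtain ⟨t, hneg, ht⟩ := ((hlim.eventually_lt_atBot 0).and (eventually_ge_atTop 0)).exists
    exact ⟨t, ht, hneg⟩
  obtain ⟨ω, hω, hXM⟩ := exists_forall_mem_Icc_of_escape isPreconnected_Icc hXcont
    (left_mem_Icc.2 hW.le) hup (right_mem_Icc.2 hW.le) hdown
    (fun ω hω s hs hMs t hst => hM.trans ((hX ω hω).clamped_ge_of_gt hp
      ((hX₀ ω).trans_le zero_le_one) hω.1 (by linarith [hω.2, hMdef]) hs hMs hst))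
    fun ω hω s hs hneg t hst =>
      ((hX ω hω).clamped_nonpos_of_neg hp (hX₀ ω).ge hs hneg hst).trans hM
  have hsol : IsForwardSolution (spiralField p ω) (X ω) := fun t ht =>
    clampedField_of_mem (hXM t ht) ▸ hX ω hω t ht
  refine ⟨ω, hω.1.lt_of_ne ?_, X ω, hX₀ ω, hsol, hsol.tendsto_frequency hp hXM⟩
  rintro rfl
  obtain ⟨t, ht, hMt⟩ := hup
  exact hMt.not_ge (hXM t ht).2

theorem exists_shootingConnects {c : ℝ} (hc : 0 < c) : ∃ ω > 0, ShootingConnects c ω := by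
  have hp : 0 < (c ^ 3)⁻¹ := inv_pos.2 (pow_pos hc 3)
  obtain ⟨ω, hω, x, hx₀, hx, hxω⟩ := exists_tendsto_frequency hp
  exact ⟨ω, hω, x, invRadius (c ^ 3)⁻¹, hx₀, invRadius_inv_cube_zero hc.le, hx,
    fun t ht => hasDerivAt_invRadius hp ht, hxω⟩

/-- Existence and uniqueness of the anchored spiral frequency: for every α* > 0 there is a
unique ω* > 0 such that the shooting solution converges to ω*; moreover ω* is strictly
increasing in α*. -/
theorem anchored_spiral_existence_uniqueness :
    (∀ αstar : ℝ, 0 < αstar → ∃! ω : ℝ, 0 < ω ∧ ShootingConnects αstar ω) ∧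
    (∀ α₁ α₂ ω₁ ω₂ : ℝ, 0 < α₁ → α₁ < α₂ →
      0 < ω₁ → ShootingConnects α₁ ω₁ →
      0 < ω₂ → ShootingConnects α₂ ω₂ → ω₁ < ω₂) := by
  refine ⟨fun c hc => ?_, fun c₁ c₂ ω₁ ω₂ hc₁ hc hω₁ h₁ _ h₂ => h₁.frequency_lt hc₁ hc hω₁ h₂⟩
  obtain ⟨ω, hω, h⟩ := exists_shootingConnects hc
  exact ⟨ω, ⟨hω, h⟩, fun ω' ⟨_, h'⟩ =>
    le_antisymm (h'.le_of_same_radius hc h) (h.le_of_same_radius hc h')⟩
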